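/- arXiv:1402.3496 — 13 statements merged into one kernel-verified Lean document; each statement's English description precedes it below -/
import Mathlib

section
/- Let p ∈ ℝ^n and p' ∈ ℝ^{n'} be probability vectors, let g ∈ ℝ^n and g' ∈ ℝ^{n'} be strictly positive probability vectors, and let G ∈ ℝ^{n'×n} be a matrix with nonnegative entries whose columns each sum to 1 and which satisfies G p = p' and G g = g'. Then for every convex function f : ℝ → ℝ, one has Σ_j g'_j · f(p'_j / g'_j) ≤ Σ_i g_i · f(p_i / g_i). -/
/-- Perspective form of the Jensen inequality with unnormalised weights. -/
theorem ConvexOn.sum_mul_map_div_le {ι : Type*} {s : Finset ι} {f : ℝ → ℝ}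
    (hf : ConvexOn ℝ Set.univ f) {w x : ι → ℝ} (hw : ∀ i ∈ s, 0 ≤ w i)
    (hpos : 0 < ∑ i ∈ s, w i) :
    (∑ i ∈ s, w i) * f ((∑ i ∈ s, w i * x i) / ∑ i ∈ s, w i) ≤ ∑ i ∈ s, w i * f (x i) := by
  have h := hf.map_centerMass_le (p := x) hw hpos fun _ _ => Set.mem_univ _
  simp only [Finset.centerMass, smul_eq_mul, Function.comp_apply, inv_mul_eq_div] at h
  rwa [le_div_iff₀' hpos] at h

/-- Monotonicity of f-divergences under Gibbs-stochastic matrices. -/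
theorem fDivergence_monotone_under_gibbsStochastic
    {n n' : ℕ} (p g : Fin n → ℝ) (p' g' : Fin n' → ℝ)
    (hp : ∀ i, 0 ≤ p i) (hps : ∑ i, p i = 1)
    (hp' : ∀ j, 0 ≤ p' j) (hps' : ∑ j, p' j = 1)
    (hg : ∀ i, 0 < g i) (hgs : ∑ i, g i = 1)
    (hg' : ∀ j, 0 < g' j) (hgs' : ∑ j, g' j = 1)
    (G : Matrix (Fin n') (Fin n) ℝ)
    (hG : ∀ j i, 0 ≤ G j i)
    (hGcol : ∀ i, ∑ j, G j i = 1)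
    (hGp : G.mulVec p = p') (hGg : G.mulVec g = g')
    (f : ℝ → ℝ) (hf : ConvexOn ℝ Set.univ f) :
    ∑ j, g' j * f (p' j / g' j) ≤ ∑ i, g i * f (p i / g i) := by
  have row_le (j : Fin n') :
      g' j * f (p' j / g' j) ≤ ∑ i, G j i * g i * f (p i / g i) := by
    have hgj : g' j = ∑ i, G j i * g i := (congrFun hGg j).symm
    have hpj : p' j = ∑ i, G j i * g i * (p i / g i) := by
      rw [← hGp, Matrix.mulVec, dotProduct]
      refine Finset.sum_congr rfl fun i _ => ?_
      rw [mul_assoc, mul_div_cancel₀ _ (hg i).ne']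
    have hpos := hg' j
    rw [hgj] at hpos
    rw [hpj, hgj]
    exact hf.sum_mul_map_div_le (fun i _ => mul_nonneg (hG j i) (hg i).le) hpos
  calc
    ∑ j, g' j * f (p' j / g' j) ≤ ∑ j, ∑ i, G j i * g i * f (p i / g i) :=
      Finset.sum_le_sum fun j _ => row_le j
    _ = ∑ i, g i * f (p i / g i) := by
      rw [Finset.sum_comm]
      refine Finset.sum_congr rfl fun i _ => ?_
      simp only [mul_assoc]
      rw [← Finset.sum_mul, hGcol, one_mul]
end

section
/- Let p ∈ ℝ^n and p' ∈ ℝ^{n'} be probability vectors, let g ∈ ℝ^n and g' ∈ ℝ^{n'} be strictly positive probability vectors with all p_i > 0 and p'_j > 0, and let G ∈ ℝ^{n'×n} be a matrix with nonnegative entries whose columns each sum to 1 and which satisfies G p = p' and G g = g'. Then the relative entropy is monotone: Σ_j p'_j · log(p'_j / g'_j) ≤ Σ_i p_i · log(p_i / g_i). -/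
/-- The tangent-line bound for `x ↦ x log x`, in homogeneous form. -/
lemma mul_log_div_add_sub_le {a b A B : ℝ} (ha : 0 < a) (hb : 0 < b) (hA : 0 < A) (hB : 0 < B) :
    a * Real.log (A / B) + (a - b * (A / B)) ≤ a * Real.log (a / b) := by
  have hlog := Real.log_le_sub_one_of_pos (div_pos (div_pos hA hB) (div_pos ha hb))
  rw [Real.log_div (div_pos hA hB).ne' (div_pos ha hb).ne'] at hlog
  have hmul := mul_le_mul_of_nonneg_left hlog ha.le
  have hcancel : a * (A / B / (a / b) - 1) = b * (A / B) - a := by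
    field_simp
  linarith

/-- The weighted log-sum inequality. -/
lemma sum_mul_log_sum_div_sum_le {ι : Type*} (s : Finset ι) (w a b : ι → ℝ)
    (hw : ∀ i ∈ s, 0 ≤ w i) (ha : ∀ i ∈ s, 0 < a i) (hb : ∀ i ∈ s, 0 < b i)
    (hA : 0 < ∑ i ∈ s, w i * a i) (hB : 0 < ∑ i ∈ s, w i * b i) :
    (∑ i ∈ s, w i * a i) * Real.log ((∑ i ∈ s, w i * a i) / ∑ i ∈ s, w i * b i) ≤
      ∑ i ∈ s, w i * (a i * Real.log (a i / b i)) := by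
  set A := ∑ i ∈ s, w i * a i with hAdef
  set B := ∑ i ∈ s, w i * b i with hBdef
  calc A * Real.log (A / B) = A * Real.log (A / B) + (A - B * (A / B)) := by
        field_simp
        ring
    _ = ∑ i ∈ s, w i * (a i * Real.log (A / B) + (a i - b i * (A / B))) := by
        simp only [mul_add, mul_sub, Finset.sum_add_distrib, Finset.sum_sub_distrib, ← mul_assoc,
          ← Finset.sum_mul, ← hAdef, ← hBdef]
    _ ≤ ∑ i ∈ s, w i * (a i * Real.log (a i / b i)) :=
        Finset.sum_le_sum fun i hi => mul_le_mul_of_nonneg_left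
          (mul_log_div_add_sub_le (ha i hi) (hb i hi) hA hB) (hw i hi)

/-- Monotonicity of relative entropy under Gibbs-stochastic matrices. -/
theorem relativeEntropy_monotone_under_gibbsStochastic
    {n n' : ℕ} (p g : Fin n → ℝ) (p' g' : Fin n' → ℝ)
    (hp : ∀ i, 0 < p i) (hps : ∑ i, p i = 1)
    (hp' : ∀ j, 0 < p' j) (hps' : ∑ j, p' j = 1)
    (hg : ∀ i, 0 < g i) (hgs : ∑ i, g i = 1)
    (hg' : ∀ j, 0 < g' j) (hgs' : ∑ j, g' j = 1)
    (G : Matrix (Fin n') (Fin n) ℝ)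
    (hG : ∀ j i, 0 ≤ G j i)
    (hGcol : ∀ i, ∑ j, G j i = 1)
    (hGp : G.mulVec p = p') (hGg : G.mulVec g = g') :
    ∑ j, p' j * Real.log (p' j / g' j) ≤ ∑ i, p i * Real.log (p i / g i) := by
  subst hGp hGg
  calc ∑ j, G.mulVec p j * Real.log (G.mulVec p j / G.mulVec g j)
      ≤ ∑ j, ∑ i, G j i * (p i * Real.log (p i / g i)) :=
        Finset.sum_le_sum fun j _ => sum_mul_log_sum_div_sum_le Finset.univ (G j) p g
          (fun i _ => hG j i) (fun i _ => hp i) (fun i _ => hg i) (hp' j) (hg' j)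
    _ = ∑ i, p i * Real.log (p i / g i) := by
        rw [Finset.sum_comm]
        simp only [← Finset.sum_mul, hGcol, one_mul]
end

section
/- Let p ∈ ℝ^n and p' ∈ ℝ^{n'} be probability vectors and let g ∈ ℝ^n and g' ∈ ℝ^{n'} be strictly positive probability vectors. If there exists a matrix G ∈ ℝ^{n'×n} with nonnegative entries whose columns each sum to 1 and which satisfies G p = p' and G g = g', then for every real number t one has Σ_j g'_j · max(p'_j/g'_j − t, 0) ≤ Σ_i g_i · max(p_i/g_i − t, 0). -/
/-- Multiplying out the denominator in a weighted positive part. -/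
theorem mul_max_div_sub_zero {a b : ℝ} (hb : 0 < b) (t : ℝ) :
    b * max (a / b - t) 0 = max (a - t * b) 0 := by
  rw [mul_max_of_nonneg _ _ hb.le, mul_zero, mul_sub, mul_div_cancel₀ _ hb.ne', mul_comm b t]

/-- A column-stochastic matrix does not increase the total positive part of a vector. -/
theorem sum_max_mulVec_zero_le {m n : Type*} [Fintype m] [Fintype n] (G : Matrix m n ℝ)
    (hG : ∀ j i, 0 ≤ G j i) (hGs : ∀ i, ∑ j, G j i = 1) (v : n → ℝ) :
    ∑ j, max (G.mulVec v j) 0 ≤ ∑ i, max (v i) 0 := by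
  calc ∑ j, max (G.mulVec v j) 0 ≤ ∑ j, ∑ i, G j i * max (v i) 0 :=
        Finset.sum_le_sum fun j _ => max_le
          (Finset.sum_le_sum fun i _ => mul_le_mul_of_nonneg_left (le_max_left _ _) (hG j i))
          (Finset.sum_nonneg fun i _ => mul_nonneg (hG j i) (le_max_right _ _))
    _ = ∑ i, max (v i) 0 := by
        rw [Finset.sum_comm]
        simp_rw [← Finset.sum_mul, hGs, one_mul]

/-- Existence of a Gibbs-stochastic matrix implies the
`(r - t)₊` inequalities (condition (d) of the mixing-distance theorem). -/
theorem gibbsStochastic_imp_plusPart_ineq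
    {n n' : ℕ} (p g : Fin n → ℝ) (p' g' : Fin n' → ℝ)
    (hp : ∀ i, 0 ≤ p i) (hps : ∑ i, p i = 1)
    (hp' : ∀ j, 0 ≤ p' j) (hps' : ∑ j, p' j = 1)
    (hg : ∀ i, 0 < g i) (hgs : ∑ i, g i = 1)
    (hg' : ∀ j, 0 < g' j) (hgs' : ∑ j, g' j = 1)
    (hex : ∃ G : Matrix (Fin n') (Fin n) ℝ,
      (∀ j i, 0 ≤ G j i) ∧ (∀ i, ∑ j, G j i = 1) ∧
      G.mulVec p = p' ∧ G.mulVec g = g') :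
    ∀ t : ℝ, ∑ j, g' j * max (p' j / g' j - t) 0 ≤ ∑ i, g i * max (p i / g i - t) 0 := by
  intro t
  obtain ⟨G, hG, hGs, hGp, hGg⟩ := hex
  simp_rw [mul_max_div_sub_zero (hg _), mul_max_div_sub_zero (hg' _)]
  have h := sum_max_mulVec_zero_le G hG hGs (p - t • g)
  simpa [Matrix.mulVec_sub, Matrix.mulVec_smul, hGp, hGg] using h
end

section
/- Let p ∈ ℝ^n and p' ∈ ℝ^{n'} be probability vectors and let g ∈ ℝ^n and g' ∈ ℝ^{n'} be strictly positive probability vectors. If for every real number t one has Σ_j g'_j · max(p'_j/g'_j − t, 0) ≤ Σ_i g_i · max(p_i/g_i − t, 0), then there exists a matrix G ∈ ℝ^{n'×n} with nonnegative entries whose columns each sum to 1 and which satisfies G p = p' and G g = g'. -/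
/-- A function with a supporting line at every point agrees on any finite set with a member of any
class `P` that contains the affine functions and is stable under adding nonnegative multiples of
hinge functions `r ↦ max (r - t) 0`. To the right of the set this member is affine and lies below
the function. -/
theorem exists_hinge_sum_eqOn_finset (P : (ℝ → ℝ) → Prop)
    (haff : ∀ a b : ℝ, P fun r => a + b * r)
    (hadd : ∀ ψ : ℝ → ℝ, P ψ → ∀ t d : ℝ, 0 ≤ d → P fun r => ψ r + d * max (r - t) 0)
    (φ : ℝ → ℝ) (hφ : ∀ x, ∃ k, ∀ r, φ x + k * (r - x) ≤ φ r) (S : Finset ℝ) :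
    ∃ ψ : ℝ → ℝ, P ψ ∧ (∀ s ∈ S, ψ s = φ s) ∧
      ∃ a b : ℝ, ∀ r, (∀ s ∈ S, s ≤ r) → ψ r = a + b * r ∧ a + b * r ≤ φ r := by
  induction S using Finset.induction_on_max with
  | empty =>
    obtain ⟨k, hk⟩ := hφ 0
    exact ⟨_, haff (φ 0) k, by simp, φ 0, k, fun r _ => ⟨rfl, by simpa using hk r⟩⟩
  | insert m S hm ih =>
    obtain ⟨k, hk⟩ := hφ m
    rcases S.eq_empty_or_nonempty with rfl | hS
    · refine ⟨_, haff (φ m - k * m) k, by simp, φ m - k * m, k, fun r _ => ⟨rfl, ?_⟩⟩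
      linarith [hk r]
    · obtain ⟨ψ, hψ, hψS, a, b, hab⟩ := ih
      set q := S.max' hS
      have hqm : q < m := hm q (S.max'_mem hS)
      have hle : ∀ s ∈ S, s ≤ q := fun s hs => S.le_max' s hs
      have hψm := hab m fun s hs => (hm s hs).le
      have hψq := hab q hle
      have hφq := hψS q (S.max'_mem hS)
      set d := (φ m - ψ m) / (m - q)
      have hdm : d * (m - q) = φ m - ψ m := div_mul_cancel₀ _ (by linarith)
      have hd0 : 0 ≤ d := div_nonneg (by linarith) (by linarith)
      have hslope : b + d ≤ k := by
        have := hk q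
        by_contra! hlt
        nlinarith
      refine ⟨_, hadd ψ hψ q d hd0, ?_, a - d * q, b + d, ?_⟩
      · intro s hs
        rcases Finset.mem_insert.1 hs with rfl | hs
        · rw [max_eq_left (by linarith)]
          linarith
        · rw [max_eq_right (by linarith [hle s hs]), hψS s hs]
          ring
      · intro r hr
        have hmr : m ≤ r := hr m (Finset.mem_insert_self _ _)
        have hψr := hab r fun s hs => hr s (Finset.mem_insert_of_mem hs)
        refine ⟨?_, ?_⟩
        · simp only [max_eq_left (show 0 ≤ r - q by linarith)]
          linarith
        · have := hk r
          nlinarith [mul_le_mul_of_nonneg_right hslope (sub_nonneg.2 hmr)]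

theorem sum_mul_affine_div {τ : Type*} [Fintype τ] (u v : τ → ℝ) (hv : ∀ i, v i ≠ 0) (a b : ℝ) :
    ∑ i, v i * (a + b * (u i / v i)) = a * ∑ i, v i + b * ∑ i, u i := by
  rw [Finset.mul_sum, Finset.mul_sum, ← Finset.sum_add_distrib]
  refine Finset.sum_congr rfl fun i _ => ?_
  have := hv i
  field_simp

/-- The hinge inequalities extend to every function with a supporting line at each point. -/
theorem sum_mul_div_le_of_hinge_le {ι κ : Type*} [Fintype ι] [Fintype κ]
    (p g : ι → ℝ) (p' g' : κ → ℝ)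
    (hg : ∀ i, g i ≠ 0) (hg' : ∀ j, g' j ≠ 0)
    (hp : ∑ j, p' j = ∑ i, p i) (hgg : ∑ j, g' j = ∑ i, g i)
    (h : ∀ t : ℝ, ∑ j, g' j * max (p' j / g' j - t) 0 ≤ ∑ i, g i * max (p i / g i - t) 0)
    (φ : ℝ → ℝ) (hφ : ∀ x, ∃ k, ∀ r, φ x + k * (r - x) ≤ φ r) :
    ∑ j, g' j * φ (p' j / g' j) ≤ ∑ i, g i * φ (p i / g i) := by
  classical
  obtain ⟨ψ, hψ, hψS, -⟩ := exists_hinge_sum_eqOn_finset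
    (fun ψ => ∑ j, g' j * ψ (p' j / g' j) ≤ ∑ i, g i * ψ (p i / g i))
    (fun a b => by
      simp only [sum_mul_affine_div p g hg, sum_mul_affine_div p' g' hg', hp, hgg, le_refl])
    (fun ψ hψ t d hd => by
      simp only [mul_add, Finset.sum_add_distrib, mul_left_comm _ d, ← Finset.mul_sum]
      exact add_le_add hψ (mul_le_mul_of_nonneg_left (h t) hd))
    φ hφ (Finset.univ.image (fun i => p i / g i) ∪ Finset.univ.image fun j => p' j / g' j)
  have hl : ∀ i, ψ (p i / g i) = φ (p i / g i) := fun i => hψS _ (by simp)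
  have hr : ∀ j, ψ (p' j / g' j) = φ (p' j / g' j) := fun j => hψS _ (by simp)
  simpa only [hl, hr] using hψ

/-- The `(r - t)₊` inequalities imply the existence of a
Gibbs-stochastic matrix (converse direction, condition (d) ⇒ (a)). -/
theorem plusPart_ineq_imp_gibbsStochastic
    {n n' : ℕ} (p g : Fin n → ℝ) (p' g' : Fin n' → ℝ)
    (hp : ∀ i, 0 ≤ p i) (hps : ∑ i, p i = 1)
    (hp' : ∀ j, 0 ≤ p' j) (hps' : ∑ j, p' j = 1)
    (hg : ∀ i, 0 < g i) (hgs : ∑ i, g i = 1)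
    (hg' : ∀ j, 0 < g' j) (hgs' : ∑ j, g' j = 1)
    (h : ∀ t : ℝ, ∑ j, g' j * max (p' j / g' j - t) 0 ≤ ∑ i, g i * max (p i / g i - t) 0) :
    ∃ G : Matrix (Fin n') (Fin n) ℝ,
      (∀ j i, 0 ≤ G j i) ∧ (∀ i, ∑ j, G j i = 1) ∧
      G.mulVec p = p' ∧ G.mulVec g = g' := by
  classical
  have hne : (Finset.univ : Finset (Fin n')).Nonempty := by
    by_contra hemp
    rw [Finset.not_nonempty_iff_eq_empty] at hemp
    simp [hemp] at hps'
  let T : (Fin n → Fin n' → ℝ) →ₗ[ℝ] (Fin n' → ℝ) × (Fin n' → ℝ) :=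
    { toFun := fun H => (∑ i, p i • H i, ∑ i, g i • H i)
      map_add' := fun H K => by simp [Finset.sum_add_distrib]
      map_smul' := fun c H => by simp [Finset.smul_sum, smul_comm c] }
  let K : Set (Fin n → Fin n' → ℝ) := Set.univ.pi fun _ => stdSimplex ℝ (Fin n')
  have hKc : IsCompact K := isCompact_univ_pi fun _ => isCompact_stdSimplex ℝ (Fin n')
  have hKv : Convex ℝ K := convex_pi fun _ _ => convex_stdSimplex ℝ (Fin n')
  by_cases hmem : (p', g') ∈ Set.image T K
  · obtain ⟨H, hH, hT⟩ := hmem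
    have hT' : ∑ i, p i • H i = p' ∧ ∑ i, g i • H i = g' := Prod.ext_iff.1 hT
    refine ⟨fun j i => H i j, fun j i => (hH i trivial).1 j, fun i => (hH i trivial).2, ?_, ?_⟩
    · rw [← hT'.1]
      ext j
      simp [Matrix.mulVec, dotProduct, mul_comm]
    · rw [← hT'.2]
      ext j
      simp [Matrix.mulVec, dotProduct, mul_comm]
  · exfalso
    obtain ⟨f, c, hfK, hfc⟩ := geometric_hahn_banach_closed_point (hKv.linear_image T)
      (hKc.image T.continuous_of_finiteDimensional).isClosed hmem
    let x : Fin n' → ℝ := fun j => f (Pi.single j 1, 0)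
    let y : Fin n' → ℝ := fun j => f (0, Pi.single j 1)
    have hf : ∀ u v : Fin n' → ℝ, f (u, v) = ∑ j, (u j * x j + v j * y j) := by
      intro u v
      have huv : (u, v) = ∑ j, (u j • ((Pi.single j 1, 0) : (Fin n' → ℝ) × (Fin n' → ℝ)) +
          v j • ((0, Pi.single j 1) : (Fin n' → ℝ) × (Fin n' → ℝ))) := by
        ext k <;> simp [Prod.fst_sum, Prod.snd_sum, Pi.single_apply]
      conv_lhs => rw [huv]
      simp only [map_sum, map_add, map_smul, smul_eq_mul, x, y]
    have hact : ∀ r : ℝ, ∃ j, ∀ k, x k * r + y k ≤ x j * r + y j := fun r => by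
      obtain ⟨j, -, hj⟩ := Finset.exists_max_image Finset.univ (fun j => x j * r + y j) hne
      exact ⟨j, fun k => hj k (Finset.mem_univ k)⟩
    choose J hJ using hact
    have hmain := sum_mul_div_le_of_hinge_le p g p' g' (fun i => (hg i).ne') (fun j => (hg' j).ne')
      (hps'.trans hps.symm) (hgs'.trans hgs.symm) h (fun r => x (J r) * r + y (J r))
      (fun s => ⟨x (J s), fun r => by linarith [hJ r (J s)]⟩)
    have hlower : f (p', g') ≤
        ∑ j, g' j * (x (J (p' j / g' j)) * (p' j / g' j) + y (J (p' j / g' j))) := by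
      rw [hf]
      refine Finset.sum_le_sum fun j _ => ?_
      have hj := mul_le_mul_of_nonneg_left (hJ (p' j / g' j) j) (hg' j).le
      have hcancel : g' j * (p' j / g' j) = p' j := mul_div_cancel₀ _ (hg' j).ne'
      linear_combination hj - x j * hcancel
    let H : Fin n → Fin n' → ℝ := fun i => Pi.single (J (p i / g i)) 1
    have hH : H ∈ K := fun i _ => single_mem_stdSimplex ℝ _
    have hTH : f (T H) = ∑ i, g i * (x (J (p i / g i)) * (p i / g i) + y (J (p i / g i))) := by
      have hsplit : T H = ∑ i, (p i • ((H i, 0) : (Fin n' → ℝ) × (Fin n' → ℝ)) +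
          g i • ((0, H i) : (Fin n' → ℝ) × (Fin n' → ℝ))) := by
        ext k <;> simp [T, Prod.fst_sum, Prod.snd_sum]
      rw [hsplit, map_sum]
      refine Finset.sum_congr rfl fun i _ => ?_
      have hcancel : g i * (p i / g i) = p i := mul_div_cancel₀ _ (hg i).ne'
      simp only [map_add, map_smul, smul_eq_mul]
      change p i * x (J (p i / g i)) + g i * y (J (p i / g i)) = _
      linear_combination - x (J (p i / g i)) * hcancel
    have hlt := hfK (T H) ⟨H, hH, rfl⟩
    linarith
end

section
/- Let p ∈ ℝ^n and p' ∈ ℝ^{n'} be probability vectors and let g ∈ ℝ^n and g' ∈ ℝ^{n'} be strictly positive probability vectors. Then the following are equivalent: (i) there exists a matrix G ∈ ℝ^{n'×n} with nonnegative entries whose columns each sum to 1 and which satisfies G p = p' and G g = g'; (ii) for every real number t one has Σ_j g'_j · |p'_j/g'_j − t| ≤ Σ_i g_i · |p_i/g_i − t|. -/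
/-- Secant interpolation of a convex function: a linear functional that vanishes on affine functions
and is nonnegative on hinges is nonnegative on some function agreeing with `φ` on `S` and at `m`, where
`m` bounds `S` above, and continuing to the right of `m` along a supporting line of `φ`. -/
theorem ConvexOn.exists_interpolation {φ : ℝ → ℝ} (hφ : ConvexOn ℝ Set.univ φ)
    (L : (ℝ → ℝ) →ₗ[ℝ] ℝ) (hL : ∀ a b : ℝ, L (fun x => a * x + b) = 0)
    (hL' : ∀ t : ℝ, 0 ≤ L (fun x => max (x - t) 0)) (S : Finset ℝ) :
    ∀ m : ℝ, (∀ x ∈ S, x < m) → ∃ (ψ : ℝ → ℝ) (s : ℝ), 0 ≤ L ψ ∧ (∀ x ∈ S, ψ x = φ x) ∧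
      (∀ y, m ≤ y → ψ y = φ m + s * (y - m)) ∧ ∀ y, m < y → s ≤ (φ y - φ m) / (y - m) := by
  induction S using Finset.induction_on_max with
  | empty =>
    intro m _
    refine ⟨fun x => (φ m - φ (m - 1)) * x + (φ m - (φ m - φ (m - 1)) * m),
      φ m - φ (m - 1), (hL _ _).ge, by simp, fun y _ => by ring, fun y hy => ?_⟩
    have h := hφ.slope_mono_adjacent (Set.mem_univ (m - 1)) (Set.mem_univ y) (by linarith) hy
    simpa using h
  | insert k S hk ih =>
    intro m hm
    have hkm : k < m := hm k (Finset.mem_insert_self _ _)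
    obtain ⟨ψ, s, h0, hS, hr, hs⟩ := ih k hk
    set s' := (φ m - φ k) / (m - k)
    have hmul : s' * (m - k) = φ m - φ k := div_mul_cancel₀ _ (sub_pos.2 hkm).ne'
    refine ⟨ψ + (s' - s) • fun x => max (x - k) 0, s', ?_, ?_, ?_, ?_⟩
    · rw [map_add, map_smul, smul_eq_mul]
      exact add_nonneg h0 (mul_nonneg (sub_nonneg.2 (hs m hkm)) (hL' k))
    · intro x hx
      rcases Finset.mem_insert.1 hx with rfl | hx
      · simp [hr x le_rfl]
      · simp [hS x hx, max_eq_right (sub_nonpos.2 (hk x hx).le)]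
    · intro y hy
      have hky : k ≤ y := hkm.le.trans hy
      simp only [Pi.add_apply, Pi.smul_apply, smul_eq_mul, hr y hky,
        max_eq_left (sub_nonneg.2 hky)]
      linear_combination hmul
    · intro y hy
      exact hφ.slope_mono_adjacent (Set.mem_univ k) (Set.mem_univ y) hkm hy

/-- Two finitely supported weights with equal mass and equal first moment that are ordered on all
functions `|x - t|` are ordered on all convex functions. -/
theorem ConvexOn.sum_mul_le_sum_mul {ι κ : Type*} [Fintype ι] [Fintype κ] {φ : ℝ → ℝ}
    (hφ : ConvexOn ℝ Set.univ φ) {w x : ι → ℝ} {w' x' : κ → ℝ}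
    (hmass : ∑ j, w' j = ∑ i, w i) (hmean : ∑ j, w' j * x' j = ∑ i, w i * x i)
    (habs : ∀ t : ℝ, ∑ j, w' j * |x' j - t| ≤ ∑ i, w i * |x i - t|) :
    ∑ j, w' j * φ (x' j) ≤ ∑ i, w i * φ (x i) := by
  classical
  let L : (ℝ → ℝ) →ₗ[ℝ] ℝ :=
    { toFun := fun f => ∑ i, w i * f (x i) - ∑ j, w' j * f (x' j)
      map_add' := fun f h => by
        simp only [Pi.add_apply, mul_add, Finset.sum_add_distrib]; ring
      map_smul' := fun c f => by
        simp only [Pi.smul_apply, smul_eq_mul, mul_left_comm _ c, ← Finset.mul_sum,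
          RingHom.id_apply, mul_sub] }
  have hLdef : ∀ f, L f = ∑ i, w i * f (x i) - ∑ j, w' j * f (x' j) := fun _ => rfl
  have hL : ∀ a b : ℝ, L (fun x => a * x + b) = 0 := by
    intro a b
    simp only [hLdef, mul_add, mul_left_comm _ a, Finset.sum_add_distrib, ← Finset.mul_sum,
      ← Finset.sum_mul, hmass, hmean, sub_self]
  have hL' : ∀ t : ℝ, 0 ≤ L (fun x => max (x - t) 0) := by
    intro t
    have hdecomp : (fun x : ℝ => max (x - t) 0) =
        (fun x => (1 / 2 : ℝ) * x + -t / 2) + (1 / 2 : ℝ) • fun x => |x - t| := by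
      ext y
      simp only [Pi.add_apply, Pi.smul_apply, smul_eq_mul]
      rcases le_total 0 (y - t) with h | h
      · rw [max_eq_left h, abs_of_nonneg h]; ring
      · rw [max_eq_right h, abs_of_nonpos h]; ring
    rw [hdecomp, map_add, hL, map_smul, zero_add, hLdef]
    exact mul_nonneg (by norm_num) (sub_nonneg.2 (habs t))
  let S : Finset ℝ := Finset.univ.image x ∪ Finset.univ.image x'
  obtain ⟨M, hM⟩ := S.exists_le
  obtain ⟨ψ, -, hψ, hS, -⟩ := hφ.exists_interpolation L hL hL' S (M + 1)
    fun y hy => (hM y hy).trans_lt (lt_add_one M)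
  have hx : ∀ i, ψ (x i) = φ (x i) := fun i => hS _ (by simp [S])
  have hx' : ∀ j, ψ (x' j) = φ (x' j) := fun j => hS _ (by simp [S])
  simpa only [hLdef, hx, hx', sub_nonneg] using hψ

/-- The pointwise maximum of finitely many affine functions is convex. -/
theorem convexOn_sup'_affine {κ : Type*} [Fintype κ] [Nonempty κ] (a b : κ → ℝ) :
    ConvexOn ℝ Set.univ fun x : ℝ =>
      Finset.univ.sup' Finset.univ_nonempty fun j => a j * x + b j := by
  refine ⟨convex_univ, fun x _ y _ s t hs ht hst => Finset.sup'_le _ _ fun j _ => ?_⟩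
  have hx := Finset.le_sup' (fun j => a j * x + b j) (Finset.mem_univ j)
  have hy := Finset.le_sup' (fun j => a j * y + b j) (Finset.mem_univ j)
  simp only [smul_eq_mul]
  calc a j * (s * x + t * y) + b j = s * (a j * x + b j) + t * (a j * y + b j) := by
        linear_combination (-b j) * hst
    _ ≤ _ := add_le_add (mul_le_mul_of_nonneg_left hx hs) (mul_le_mul_of_nonneg_left hy ht)

/-- If no column-stochastic matrix maps the pair `(p, g)` to `(p', g')`, then some family of affine
functionals separates the two pairs. -/
theorem exists_separating_of_not_exists_stochastic {ι κ : Type*} [Fintype ι] [Fintype κ]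
    (p g : ι → ℝ) (p' g' : κ → ℝ)
    (h : ¬ ∃ G : Matrix κ ι ℝ, (∀ j i, 0 ≤ G j i) ∧ (∀ i, ∑ j, G j i = 1) ∧
      G.mulVec p = p' ∧ G.mulVec g = g') :
    ∃ a b : κ → ℝ, ∀ c : ι → κ,
      ∑ i, (a (c i) * p i + b (c i) * g i) < ∑ j, (a j * p' j + b j * g' j) := by
  classical
  let T : (ι → κ → ℝ) →ₗ[ℝ] (κ → ℝ) × (κ → ℝ) :=
    LinearMap.prod (∑ i, p i • LinearMap.proj i) (∑ i, g i • LinearMap.proj i)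
  have hT : ∀ H, T H = (∑ i, p i • H i, ∑ i, g i • H i) := fun H => by simp [T]
  let K : Set (ι → κ → ℝ) := Set.univ.pi fun _ => stdSimplex ℝ κ
  have hK : IsCompact K := isCompact_univ_pi fun _ => isCompact_stdSimplex ℝ κ
  have hKc : Convex ℝ K := convex_pi fun _ _ => convex_stdSimplex ℝ κ
  have hTK : IsCompact (T '' K) := hK.image T.continuous_of_finiteDimensional
  have hmem : (p', g') ∉ T '' K := by
    rintro ⟨H, hH, hHeq⟩
    rw [hT, Prod.mk.injEq] at hHeq
    refine h ⟨fun j i => H i j, fun j i => (hH i trivial).1 j, fun i => (hH i trivial).2, ?_, ?_⟩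
    · rw [← hHeq.1]; ext j; simp [Matrix.mulVec, dotProduct, mul_comm]
    · rw [← hHeq.2]; ext j; simp [Matrix.mulVec, dotProduct, mul_comm]
  obtain ⟨f, u, hfu, huf⟩ :=
    geometric_hahn_banach_closed_point (hKc.linear_image T) hTK.isClosed hmem
  have hf : ∀ v w : κ → ℝ, f (v, w) =
      ∑ j, (f (Pi.single j 1, 0) * v j + f (0, Pi.single j 1) * w j) := by
    intro v w
    have hv := LinearMap.pi_apply_eq_sum_univ
      ((f : (κ → ℝ) × (κ → ℝ) →ₗ[ℝ] ℝ) ∘ₗ LinearMap.inl ℝ (κ → ℝ) (κ → ℝ)) v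
    have hw := LinearMap.pi_apply_eq_sum_univ
      ((f : (κ → ℝ) × (κ → ℝ) →ₗ[ℝ] ℝ) ∘ₗ LinearMap.inr ℝ (κ → ℝ) (κ → ℝ)) w
    have hsingle : ∀ j : κ, (fun k => if j = k then (1 : ℝ) else 0) = Pi.single j 1 := by
      intro j; ext k; simp [Pi.single_apply, eq_comm]
    simp only [LinearMap.comp_apply, LinearMap.inl_apply, LinearMap.inr_apply,
      ContinuousLinearMap.coe_coe, hsingle, smul_eq_mul] at hv hw
    have hvw : ((v, w) : (κ → ℝ) × (κ → ℝ)) = (v, 0) + (0, w) := by simp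
    rw [hvw, map_add, hv, hw, ← Finset.sum_add_distrib]
    simp only [mul_comm]
  refine ⟨fun j => f (Pi.single j 1, 0), fun j => f (0, Pi.single j 1), fun c => ?_⟩
  rw [← hf]
  refine lt_of_eq_of_lt ?_ ((hfu _ (Set.mem_image_of_mem T
    (fun i _ => single_mem_stdSimplex ℝ (c i) : (fun i => Pi.single (c i) 1) ∈ K))).trans huf)
  have hsplit : T (fun i => Pi.single (c i) 1) =
      ∑ i, (p i • ((Pi.single (c i) 1, 0) : (κ → ℝ) × (κ → ℝ)) +
        g i • ((0, Pi.single (c i) 1) : (κ → ℝ) × (κ → ℝ))) := by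
    rw [hT]
    ext j <;> simp [Prod.fst_sum, Prod.snd_sum]
  rw [hsplit, map_sum]
  simp only [map_add, map_smul, smul_eq_mul, mul_comm]

/-- A column-stochastic matrix does not increase the `ℓ¹` norm. -/
theorem sum_abs_mulVec_le {ι κ : Type*} [Fintype ι] [Fintype κ] {G : Matrix κ ι ℝ}
    (hG : ∀ j i, 0 ≤ G j i) (hG1 : ∀ i, ∑ j, G j i = 1) (v : ι → ℝ) :
    ∑ j, |G.mulVec v j| ≤ ∑ i, |v i| := by
  calc ∑ j, |G.mulVec v j| ≤ ∑ j, ∑ i, G j i * |v i| := by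
        refine Finset.sum_le_sum fun j _ => (Finset.abs_sum_le_sum_abs _ _).trans_eq ?_
        simp only [abs_mul, abs_of_nonneg (hG j _)]
    _ = ∑ i, |v i| := by
        rw [Finset.sum_comm]
        simp only [← Finset.sum_mul, hG1, one_mul]


/-- Existence of a Gibbs-stochastic matrix is equivalent to the
`|r - t|` inequalities (conditions (a) ⇔ (e) of the mixing-distance theorem). -/
theorem gibbsStochastic_iff_abs_ineq
    {n n' : ℕ} (p g : Fin n → ℝ) (p' g' : Fin n' → ℝ)
    (hp : ∀ i, 0 ≤ p i) (hps : ∑ i, p i = 1)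
    (hp' : ∀ j, 0 ≤ p' j) (hps' : ∑ j, p' j = 1)
    (hg : ∀ i, 0 < g i) (hgs : ∑ i, g i = 1)
    (hg' : ∀ j, 0 < g' j) (hgs' : ∑ j, g' j = 1) :
    (∃ G : Matrix (Fin n') (Fin n) ℝ,
      (∀ j i, 0 ≤ G j i) ∧ (∀ i, ∑ j, G j i = 1) ∧
      G.mulVec p = p' ∧ G.mulVec g = g') ↔
    (∀ t : ℝ, ∑ j, g' j * |p' j / g' j - t| ≤ ∑ i, g i * |p i / g i - t|) := by
  have hcancel : ∀ i, g i * (p i / g i) = p i := fun i => mul_div_cancel₀ _ (hg i).ne'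
  have hcancel' : ∀ j, g' j * (p' j / g' j) = p' j := fun j => mul_div_cancel₀ _ (hg' j).ne'
  constructor
  · rintro ⟨G, hG, hG1, hGp, hGg⟩ t
    have hl : ∀ j, g' j * |p' j / g' j - t| = |G.mulVec (p - t • g) j| := fun j => by
      rw [← abs_of_pos (hg' j), ← abs_mul, abs_of_pos (hg' j), mul_sub, hcancel',
        Matrix.mulVec_sub, Matrix.mulVec_smul, hGp, hGg]
      simp [mul_comm]
    have hr : ∀ i, g i * |p i / g i - t| = |(p - t • g) i| := fun i => by
      rw [← abs_of_pos (hg i), ← abs_mul, abs_of_pos (hg i), mul_sub, hcancel]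
      simp [mul_comm]
    simp only [hl, hr]
    exact sum_abs_mulVec_le hG hG1 _
  · intro habs
    by_contra hno
    obtain ⟨a, b, hab⟩ := exists_separating_of_not_exists_stochastic p g p' g' hno
    have : Nonempty (Fin n') := by
      by_contra hempty
      rw [not_nonempty_iff] at hempty
      simp at hgs'
    have hconv := (convexOn_sup'_affine a b).sum_mul_le_sum_mul (hgs'.trans hgs.symm)
      (by simp only [hcancel, hcancel', hps, hps']) habs
    choose c _ hc using fun i => Finset.exists_mem_eq_sup' (Finset.univ_nonempty (α := Fin n'))
      fun j => a j * (p i / g i) + b j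
    refine (hab c).not_ge ?_
    calc ∑ j, (a j * p' j + b j * g' j)
        = ∑ j, g' j * (a j * (p' j / g' j) + b j) := Finset.sum_congr rfl fun j _ => by
          linear_combination (-a j) * hcancel' j
      _ ≤ _ := Finset.sum_le_sum fun j _ => mul_le_mul_of_nonneg_left
          (Finset.le_sup' (fun k => a k * (p' j / g' j) + b k) (Finset.mem_univ j)) (hg' j).le
      _ ≤ _ := hconv
      _ = ∑ i, (a (c i) * p i + b (c i) * g i) := Finset.sum_congr rfl fun i _ => by
          rw [hc i]
          linear_combination a (c i) * hcancel i
end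

section
/- Let p ∈ ℝ^n and p' ∈ ℝ^{n'} be probability vectors and let g ∈ ℝ^n and g' ∈ ℝ^{n'} be strictly positive probability vectors. If for every convex function f : ℝ → ℝ one has Σ_j g'_j · f(p'_j/g'_j) ≤ Σ_i g_i · f(p_i/g_i), then there exists a matrix G ∈ ℝ^{n'×n} with nonnegative entries whose columns each sum to 1 and which satisfies G p = p' and G g = g'. -/
open Finset in
/-- A finite maximum of affine functions on the real line is convex. -/
theorem convexOn_sup'_affine_s6 {ι : Type*} {s : Finset ι} (hs : s.Nonempty) (α β : ι → ℝ) :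
    ConvexOn ℝ Set.univ fun x : ℝ => s.sup' hs fun j => α j * x + β j := by
  refine ⟨convex_univ, fun x _ y _ a b ha hb hab => sup'_le _ _ fun j hj => ?_⟩
  have hx := le_sup' (fun j => α j * x + β j) hj
  have hy := le_sup' (fun j => α j * y + β j) hj
  calc α j * (a • x + b • y) + β j = a • (α j * x + β j) + b • (α j * y + β j) := by
        simp only [smul_eq_mul]
        linear_combination (-β j) * hab
    _ ≤ _ := add_le_add (smul_le_smul_of_nonneg_left hx ha) (smul_le_smul_of_nonneg_left hy hb)

/-- A linear functional on a product of two coordinate spaces, in coordinates. -/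
theorem linearMap_prod_pi_apply {ι : Type*} [Fintype ι] [DecidableEq ι]
    (φ : (ι → ℝ) × (ι → ℝ) →ₗ[ℝ] ℝ) (a b : ι → ℝ) :
    φ (a, b) = ∑ j, (φ (Pi.single j 1, 0) * a j + φ (0, Pi.single j 1) * b j) := by
  have hl := LinearMap.pi_apply_eq_sum_univ (φ ∘ₗ LinearMap.inl ℝ (ι → ℝ) (ι → ℝ)) a
  have hr := LinearMap.pi_apply_eq_sum_univ (φ ∘ₗ LinearMap.inr ℝ (ι → ℝ) (ι → ℝ)) b
  have hsingle (i : ι) : (fun j => if i = j then (1 : ℝ) else 0) = Pi.single i 1 := by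
    ext j
    simp [Pi.single_apply, eq_comm]
  simp only [LinearMap.comp_apply, LinearMap.inl_apply, LinearMap.inr_apply, smul_eq_mul,
    hsingle] at hl hr
  have hab : (a, b) = (a, 0) + ((0, b) : (ι → ℝ) × (ι → ℝ)) := by simp
  rw [hab, map_add, hl, hr, ← Finset.sum_add_distrib]
  exact Finset.sum_congr rfl fun j _ => by ring

/-- The linear map sending a family of columns `M` to the pair of its combinations with weights
`p` and `g`. -/
noncomputable def columnCombinations {ι κ : Type*} [Fintype ι] (p g : ι → ℝ) :
    (ι → κ → ℝ) →ₗ[ℝ] (κ → ℝ) × (κ → ℝ) :=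
  (∑ i, p i • LinearMap.proj i).prod (∑ i, g i • LinearMap.proj i)

theorem columnCombinations_apply {ι κ : Type*} [Fintype ι] (p g : ι → ℝ) (M : ι → κ → ℝ) :
    columnCombinations p g M = (∑ i, p i • M i, ∑ i, g i • M i) := by
  simp [columnCombinations]

/-- If all f-divergences (f convex) are monotone from (p,g) to (p',g'),
then a Gibbs-stochastic matrix exists (condition (b) ⇒ (a)). -/
theorem fDivergence_ineq_imp_gibbsStochastic
    {n n' : ℕ} (p g : Fin n → ℝ) (p' g' : Fin n' → ℝ)
    (hp : ∀ i, 0 ≤ p i) (hps : ∑ i, p i = 1)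
    (hp' : ∀ j, 0 ≤ p' j) (hps' : ∑ j, p' j = 1)
    (hg : ∀ i, 0 < g i) (hgs : ∑ i, g i = 1)
    (hg' : ∀ j, 0 < g' j) (hgs' : ∑ j, g' j = 1)
    (h : ∀ f : ℝ → ℝ, ConvexOn ℝ Set.univ f →
      ∑ j, g' j * f (p' j / g' j) ≤ ∑ i, g i * f (p i / g i)) :
    ∃ G : Matrix (Fin n') (Fin n) ℝ,
      (∀ j i, 0 ≤ G j i) ∧ (∀ i, ∑ j, G j i = 1) ∧
      G.mulVec p = p' ∧ G.mulVec g = g' := by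
  classical
  have hne : (Finset.univ : Finset (Fin n')).Nonempty := by
    by_contra hempty
    rw [Finset.not_nonempty_iff_eq_empty] at hempty
    simp [hempty] at hps'
  set L := columnCombinations (κ := Fin n') p g with hL
  set K : Set (Fin n → Fin n' → ℝ) := Set.univ.pi fun _ => stdSimplex ℝ (Fin n')
  have hKconvex : Convex ℝ K := convex_pi fun _ _ => convex_stdSimplex ℝ _
  have hKcompact : IsCompact K := isCompact_univ_pi fun _ => isCompact_stdSimplex ℝ _
  by_cases hmem : (p', g') ∈ L '' K
  · obtain ⟨M, hM, hLM⟩ := hmem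
    rw [hL, columnCombinations_apply, Prod.mk.injEq] at hLM
    refine ⟨Matrix.of fun j i => M i j, fun j i => (hM i trivial).1 j,
      fun i => (hM i trivial).2, ?_, ?_⟩
    · rw [← hLM.1]
      ext j
      simp [Matrix.mulVec, dotProduct, mul_comm]
    · rw [← hLM.2]
      ext j
      simp [Matrix.mulVec, dotProduct, mul_comm]
  · obtain ⟨φ, u, hφK, hφ⟩ := geometric_hahn_banach_closed_point (hKconvex.linear_image L)
      (hKcompact.image L.continuous_of_finiteDimensional).isClosed hmem
    have hcoord := linearMap_prod_pi_apply (φ : (Fin n' → ℝ) × (Fin n' → ℝ) →ₗ[ℝ] ℝ)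
    simp only [ContinuousLinearMap.coe_coe] at hcoord
    set α : Fin n' → ℝ := fun j => φ (Pi.single j 1, 0)
    set β : Fin n' → ℝ := fun j => φ (0, Pi.single j 1)
    set f : ℝ → ℝ := fun x => Finset.univ.sup' hne fun j => α j * x + β j
    have hdiv := h f (convexOn_sup'_affine_s6 hne α β)
    have hlower : φ (p', g') ≤ ∑ j, g' j * f (p' j / g' j) := by
      rw [hcoord]
      refine Finset.sum_le_sum fun j _ => ?_
      have hj : α j * (p' j / g' j) + β j ≤ f (p' j / g' j) :=
        Finset.le_sup' (fun k => α k * (p' j / g' j) + β k) (Finset.mem_univ j)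
      calc α j * p' j + β j * g' j = g' j * (α j * (p' j / g' j) + β j) := by
            have := (hg' j).ne'
            field_simp
        _ ≤ _ := mul_le_mul_of_nonneg_left hj (hg' j).le
    have hmax (i : Fin n) : ∃ j, f (p i / g i) = α j * (p i / g i) + β j := by
      obtain ⟨j, -, hj⟩ :=
        Finset.exists_mem_eq_sup' hne fun j => α j * (p i / g i) + β j
      exact ⟨j, hj⟩
    choose c hc using hmax
    have hupper : φ (L fun i => Pi.single (c i) 1) = ∑ i, g i * f (p i / g i) := by
      rw [hL, columnCombinations_apply, hcoord]
      simp only [Finset.sum_apply, Pi.smul_apply, smul_eq_mul, Finset.mul_sum,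
        ← Finset.sum_add_distrib]
      rw [Finset.sum_comm]
      refine Finset.sum_congr rfl fun i _ => ?_
      have := (hg i).ne'
      rw [hc i, Finset.sum_eq_single (c i) (fun j _ hj => by simp [hj]) (by simp)]
      simp only [Pi.single_eq_same]
      field_simp
      simp only [α, β]
      ring
    have hK' : (fun i => Pi.single (c i) 1) ∈ K := fun i _ => single_mem_stdSimplex ℝ (c i)
    have := hφK _ (Set.mem_image_of_mem L hK')
    linarith
end

section
/- Let p ∈ ℝ^n and p' ∈ ℝ^{n'} be probability vectors and let g ∈ ℝ^n and g' ∈ ℝ^{n'} be strictly positive probability vectors. For t ∈ [0,1] define the Lorenz curve L_{(p,g)}(t) = max { Σ_i c_i p_i : c ∈ ℝ^n, 0 ≤ c_i ≤ 1 for all i, Σ_i c_i g_i = t }. Then the following are equivalent: (i) there exists a matrix G ∈ ℝ^{n'×n} with nonnegative entries whose columns each sum to 1 and which satisfies G p = p' and G g = g'; (ii) for every t ∈ [0,1], L_{(p',g')}(t) ≤ L_{(p,g)}(t). -/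
/-- The Lorenz curve of the resource `(p,g)`:
`L_{(p,g)}(t) = max { Σ_i c_i p_i : 0 ≤ c_i ≤ 1, Σ_i c_i g_i = t }`. -/
noncomputable def lorenz {n : ℕ} (p g : Fin n → ℝ) (t : ℝ) : ℝ :=
  sSup {s : ℝ | ∃ c : Fin n → ℝ, (∀ i, 0 ≤ c i ∧ c i ≤ 1) ∧
    (∑ i, c i * g i = t) ∧ (∑ i, c i * p i = s)}

/-- Sums of an affine function and nonnegative multiples of hinges `x ↦ max (x - m) 0`. -/
inductive IsHingeSum : (ℝ → ℝ) → Prop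
  | affine (a b : ℝ) : IsHingeSum fun x => a * x + b
  | add_hinge {r : ℝ → ℝ} (δ m : ℝ) (hr : IsHingeSum r) (hδ : 0 ≤ δ) :
      IsHingeSum fun x => r x + δ * max (x - m) 0

/-- A function with a supporting line at every point agrees on any finite set with a hinge sum. -/
theorem exists_isHingeSum_eqOn {φ : ℝ → ℝ}
    (hφ : ∀ x, ∃ β, ∀ y, φ x + β * (y - x) ≤ φ y) (S : Finset ℝ) :
    ∃ r, IsHingeSum r ∧ ∀ x ∈ S, r x = φ x := by
  suffices h : S = ∅ ∨ ∃ r, IsHingeSum r ∧ (∀ x ∈ S, r x = φ x) ∧ ∃ m κ, (∀ x ∈ S, x ≤ m) ∧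
      m ∈ S ∧ ∀ y, m ≤ y → r y = φ m + κ * (y - m) ∧ φ m + κ * (y - m) ≤ φ y by
    rcases h with rfl | ⟨r, hr, h, -⟩
    · exact ⟨_, .affine 0 0, by simp⟩
    · exact ⟨r, hr, h⟩
  induction S using Finset.induction_on_max with
  | empty => exact Or.inl rfl
  | insert M S hM ih =>
    right
    obtain ⟨β, hβ⟩ := hφ M
    rcases ih with rfl | ⟨r, hr, hrS, m, κ, hm, hmS, hy⟩
    · refine ⟨_, .affine β (φ M - β * M), ?_, M, β, ?_, ?_, ?_⟩
      · simp
      · simp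
      · simp
      · exact fun y _ => ⟨by ring, hβ y⟩
    · have hmM : 0 < M - m := sub_pos.2 (hM m hmS)
      have hκ : 0 ≤ (φ M - φ m) / (M - m) - κ := by
        rw [sub_nonneg, le_div_iff₀ hmM]
        linarith [(hy M (hM m hmS).le).2]
      set δ := (φ M - φ m) / (M - m) - κ with hδ
      have hslope : (κ + δ) * (M - m) = φ M - φ m := by
        rw [hδ]; field_simp; ring
      have hval : ∀ y, m ≤ y → r y + δ * max (y - m) 0 = φ m + (κ + δ) * (y - m) := by
        intro y hmy
        rw [max_eq_left (sub_nonneg.2 hmy), (hy y hmy).1]; ring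
      refine ⟨_, hr.add_hinge δ m hκ, ?_, M, κ + δ, ?_, Finset.mem_insert_self _ _, ?_⟩
      · intro x hx
        rcases Finset.mem_insert.1 hx with rfl | hx
        · rw [hval _ (hM m hmS).le]; linarith
        · rw [max_eq_right (sub_nonpos.2 (hm x hx)), hrS x hx]; ring
      · intro x hx
        rcases Finset.mem_insert.1 hx with rfl | hx
        · exact le_rfl
        · exact (hM x hx).le
      · intro y hMy
        refine ⟨?_, ?_⟩
        · rw [hval y ((hM m hmS).le.trans hMy)]; linarith
        · have hle : κ + δ ≤ β := by
            refine le_of_mul_le_mul_right ?_ hmM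
            linarith [hβ m]
          nlinarith [hβ y, mul_le_mul_of_nonneg_right hle (sub_nonneg.2 hMy)]

/-- Every value of the maximization problem defining the Lorenz curve is at most the curve. -/
theorem le_lorenz {n : ℕ} {p g : Fin n → ℝ} (hp : ∀ i, 0 ≤ p i) {c : Fin n → ℝ}
    (hc : ∀ i, 0 ≤ c i ∧ c i ≤ 1) : ∑ i, c i * p i ≤ lorenz p g (∑ i, c i * g i) := by
  refine le_csSup ⟨∑ i, p i, ?_⟩ ⟨c, hc, rfl, rfl⟩
  rintro _ ⟨d, hd, -, rfl⟩
  exact Finset.sum_le_sum fun i _ => mul_le_of_le_one_left (hp i) (hd i).2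

/-- An upper bound for all admissible values bounds the Lorenz curve. -/
theorem lorenz_le {n : ℕ} {p g : Fin n → ℝ} (hgs : ∑ i, g i = 1) {t : ℝ}
    (ht : t ∈ Set.Icc (0 : ℝ) 1) {B : ℝ}
    (hB : ∀ c : Fin n → ℝ, (∀ i, 0 ≤ c i ∧ c i ≤ 1) → ∑ i, c i * g i = t → ∑ i, c i * p i ≤ B) :
    lorenz p g t ≤ B := by
  refine csSup_le ⟨_, fun _ => t, fun _ => ht, ?_, rfl⟩ ?_
  · rw [← Finset.mul_sum, hgs, mul_one]
  · rintro _ ⟨c, hc, hct, rfl⟩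
    exact hB c hc hct

/-- Lorenz domination implies domination of all hinge sums `∑ i, max (p i - s * g i) 0`. -/
theorem sum_hinge_le_of_lorenz_le {n n' : ℕ} {p g : Fin n → ℝ} {p' g' : Fin n' → ℝ}
    (hp' : ∀ j, 0 ≤ p' j) (hgs : ∑ i, g i = 1) (hg' : ∀ j, 0 < g' j) (hgs' : ∑ j, g' j = 1)
    (h : ∀ t ∈ Set.Icc (0 : ℝ) 1, lorenz p' g' t ≤ lorenz p g t) (s : ℝ) :
    ∑ j, max (p' j - s * g' j) 0 ≤ ∑ i, max (p i - s * g i) 0 := by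
  classical
  set c : Fin n' → ℝ := fun j => if 0 ≤ p' j - s * g' j then 1 else 0 with hc
  have hc01 : ∀ j, 0 ≤ c j ∧ c j ≤ 1 := fun j => by
    simp only [hc]; split_ifs <;> norm_num
  set t := ∑ j, c j * g' j with ht
  have htmem : t ∈ Set.Icc (0 : ℝ) 1 := by
    refine ⟨Finset.sum_nonneg fun j _ => mul_nonneg (hc01 j).1 (hg' j).le, ?_⟩
    rw [← hgs']
    exact Finset.sum_le_sum fun j _ => mul_le_of_le_one_left (hg' j).le (hc01 j).2
  have hsum : ∑ j, max (p' j - s * g' j) 0 = ∑ j, c j * p' j - s * t := by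
    rw [ht, Finset.mul_sum, ← Finset.sum_sub_distrib]
    refine Finset.sum_congr rfl fun j _ => ?_
    simp only [hc]
    split_ifs with hj
    · rw [max_eq_left hj]; ring
    · rw [max_eq_right (not_le.1 hj).le]; ring
  have hle : lorenz p g t ≤ ∑ i, max (p i - s * g i) 0 + s * t := by
    refine lorenz_le hgs htmem fun d hd hdt => ?_
    rw [← hdt, Finset.mul_sum, ← Finset.sum_add_distrib]
    refine Finset.sum_le_sum fun i _ => ?_
    have := mul_le_mul_of_nonneg_left (le_max_left (p i - s * g i) 0) (hd i).1
    have := mul_le_of_le_one_left (le_max_right (p i - s * g i) 0) (hd i).2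
    linarith
  linarith [le_lorenz (g := g') hp' hc01, h t htmem]

/-- Lorenz domination implies domination of the `r`-divergences for every hinge sum `r`. -/
theorem IsHingeSum.sum_le {n n' : ℕ} {p g : Fin n → ℝ} {p' g' : Fin n' → ℝ}
    (hps : ∑ i, p i = 1) (hp' : ∀ j, 0 ≤ p' j) (hps' : ∑ j, p' j = 1)
    (hg : ∀ i, 0 < g i) (hgs : ∑ i, g i = 1) (hg' : ∀ j, 0 < g' j) (hgs' : ∑ j, g' j = 1)
    (h : ∀ t ∈ Set.Icc (0 : ℝ) 1, lorenz p' g' t ≤ lorenz p g t) {r : ℝ → ℝ}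
    (hr : IsHingeSum r) :
    ∑ j, g' j * r (p' j / g' j) ≤ ∑ i, g i * r (p i / g i) := by
  induction hr with
  | affine a b =>
    have key : ∀ {k : ℕ} {q e : Fin k → ℝ}, ∑ i, q i = 1 → (∀ i, 0 < e i) → ∑ i, e i = 1 →
        ∑ i, e i * (a * (q i / e i) + b) = a + b := by
      intro k q e hq he hes
      calc ∑ i, e i * (a * (q i / e i) + b) = ∑ i, (a * q i + b * e i) :=
            Finset.sum_congr rfl fun i _ => by have := (he i).ne'; field_simp
        _ = a + b := by
            rw [Finset.sum_add_distrib, ← Finset.mul_sum, ← Finset.mul_sum, hq, hes]; ring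
    rw [key hps hg hgs, key hps' hg' hgs']
  | add_hinge δ m _ hδ ih =>
    rename_i r _
    have key : ∀ {k : ℕ} {q e : Fin k → ℝ}, (∀ i, 0 < e i) →
        ∑ i, e i * (r (q i / e i) + δ * max (q i / e i - m) 0) =
          ∑ i, e i * r (q i / e i) + δ * ∑ i, max (q i - m * e i) 0 := by
      intro k q e he
      rw [Finset.mul_sum, ← Finset.sum_add_distrib]
      refine Finset.sum_congr rfl fun i _ => ?_
      have hmax : max (q i - m * e i) 0 = e i * max (q i / e i - m) 0 := by
        rw [mul_max_of_nonneg _ _ (he i).le, mul_sub, mul_div_cancel₀ _ (he i).ne', mul_zero,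
          mul_comm m]
      rw [hmax]; ring
    rw [key hg, key hg']
    exact add_le_add ih (mul_le_mul_of_nonneg_left
      (sum_hinge_le_of_lorenz_le hp' hgs hg' hgs' h m) hδ)

/-- Lorenz domination bounds every linear functional of `(p', g')` by its value at the image of
`(p, g)` under some deterministic stochastic matrix. -/
theorem exists_sum_le_of_lorenz_le {n n' : ℕ} {p g : Fin n → ℝ} {p' g' : Fin n' → ℝ}
    (hps : ∑ i, p i = 1) (hp' : ∀ j, 0 ≤ p' j) (hps' : ∑ j, p' j = 1)
    (hg : ∀ i, 0 < g i) (hgs : ∑ i, g i = 1) (hg' : ∀ j, 0 < g' j) (hgs' : ∑ j, g' j = 1)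
    (h : ∀ t ∈ Set.Icc (0 : ℝ) 1, lorenz p' g' t ≤ lorenz p g t) (a b : Fin n' → ℝ) :
    ∃ σ : Fin n → Fin n',
      ∑ j, (p' j * a j + g' j * b j) ≤ ∑ i, (p i * a (σ i) + g i * b (σ i)) := by
  classical
  have hne : Nonempty (Fin n') := by
    by_contra hempty
    rw [not_nonempty_iff] at hempty
    simp at hps'
  choose τ hτ using fun x : ℝ => Finite.exists_max fun j => a j * x + b j
  set φ : ℝ → ℝ := fun x => a (τ x) * x + b (τ x) with hφ
  have hsupp : ∀ x, ∃ β, ∀ y, φ x + β * (y - x) ≤ φ y := fun x =>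
    ⟨a (τ x), fun y => by have := hτ y (τ x); simp only [hφ]; linarith⟩
  obtain ⟨r, hr, hrS⟩ := exists_isHingeSum_eqOn hsupp
    (Finset.univ.image (fun i => p i / g i) ∪ Finset.univ.image (fun j => p' j / g' j))
  have hle := hr.sum_le hps hp' hps' hg hgs hg' hgs' h
  refine ⟨fun i => τ (p i / g i), ?_⟩
  calc ∑ j, (p' j * a j + g' j * b j) ≤ ∑ j, g' j * r (p' j / g' j) := by
        refine Finset.sum_le_sum fun j _ => ?_
        rw [hrS _ (by simp)]
        refine le_of_eq_of_le ?_ (mul_le_mul_of_nonneg_left (hτ (p' j / g' j) j) (hg' j).le)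
        have := (hg' j).ne'
        field_simp
    _ ≤ ∑ i, g i * r (p i / g i) := hle
    _ = _ := by
        refine Finset.sum_congr rfl fun i _ => ?_
        rw [hrS _ (by simp)]
        have := (hg i).ne'
        simp only [hφ]
        field_simp

/-- If every linear functional is dominated on the image of the deterministic matrices, then some
stochastic matrix, given by its columns, maps `(p, g)` to `(p', g')`. -/
theorem exists_columns_of_forall_exists_le {n n' : ℕ} {p g : Fin n → ℝ} {p' g' : Fin n' → ℝ}
    (h : ∀ a b : Fin n' → ℝ, ∃ σ : Fin n → Fin n',
      ∑ j, (p' j * a j + g' j * b j) ≤ ∑ i, (p i * a (σ i) + g i * b (σ i))) :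
    ∃ H : Fin n → Fin n' → ℝ, (∀ i, H i ∈ stdSimplex ℝ (Fin n')) ∧
      ∑ i, p i • H i = p' ∧ ∑ i, g i • H i = g' := by
  classical
  let T : (Fin n → Fin n' → ℝ) →ₗ[ℝ] (Fin n' → ℝ) × (Fin n' → ℝ) :=
    (∑ i, p i • LinearMap.proj i).prod (∑ i, g i • LinearMap.proj i)
  have hT : ∀ H, T H = (∑ i, p i • H i, ∑ i, g i • H i) := fun H => by
    simp [T]
  set C : Set (Fin n → Fin n' → ℝ) := Set.univ.pi fun _ => stdSimplex ℝ (Fin n')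
  have hCconv : Convex ℝ (T '' C) :=
    (convex_pi fun _ _ => convex_stdSimplex ℝ (Fin n')).linear_image T
  have hCcomp : IsCompact (T '' C) :=
    (isCompact_univ_pi fun _ => isCompact_stdSimplex ℝ (Fin n')).image
      T.continuous_of_finiteDimensional
  by_cases hmem : (p', g') ∈ T '' C
  · obtain ⟨H, hH, hHT⟩ := hmem
    rw [hT, Prod.mk.injEq] at hHT
    exact ⟨H, fun i => hH i trivial, hHT⟩
  · exfalso
    obtain ⟨f, u, hfu, huf⟩ := geometric_hahn_banach_closed_point hCconv hCcomp.isClosed hmem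
    obtain ⟨σ, hσ⟩ := h (fun j => f (Pi.single j 1, 0)) (fun j => f (0, Pi.single j 1))
    have hsplit : ∀ x y, f (x, y) = f (x, 0) + f (0, y) := fun x y => by
      rw [← map_add]; simp
    have hf₁ : f (p', 0) = ∑ j, p' j * f (Pi.single j 1, 0) := by
      have : (p', (0 : Fin n' → ℝ)) = ∑ j, p' j • (Pi.single j (1 : ℝ), (0 : Fin n' → ℝ)) := by
        ext <;> simp [Prod.fst_sum, Prod.snd_sum, Finset.sum_apply, Pi.single_apply]
      rw [this, map_sum]
      simp only [map_smul, smul_eq_mul]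
    have hf₂ : f (0, g') = ∑ j, g' j * f (0, Pi.single j 1) := by
      have : ((0 : Fin n' → ℝ), g') = ∑ j, g' j • ((0 : Fin n' → ℝ), Pi.single j (1 : ℝ)) := by
        ext <;> simp [Prod.fst_sum, Prod.snd_sum, Finset.sum_apply, Pi.single_apply]
      rw [this, map_sum]
      simp only [map_smul, smul_eq_mul]
    have hlt := hfu _ (Set.mem_image_of_mem T
      (show (fun i => Pi.single (σ i) 1) ∈ C from fun i _ => single_mem_stdSimplex ℝ (σ i)))
    have hTσ : f (T fun i => Pi.single (σ i) 1) =
        ∑ i, (p i * f (Pi.single (σ i) 1, 0) + g i * f (0, Pi.single (σ i) 1)) := by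
      have : (T fun i => Pi.single (σ i) 1) = ∑ i, (p i • (Pi.single (σ i) (1 : ℝ), 0) +
          g i • ((0 : Fin n' → ℝ), Pi.single (σ i) (1 : ℝ))) := by
        rw [hT]
        ext1 <;> simp [Prod.fst_sum, Prod.snd_sum]
      rw [this, map_sum]
      simp only [map_add, map_smul, smul_eq_mul]
    rw [hsplit, hf₁, hf₂, ← Finset.sum_add_distrib] at huf
    linarith

/-- Existence of a Gibbs-stochastic matrix is equivalent to
pointwise domination of Lorenz curves. -/
theorem gibbsStochastic_iff_lorenz_le
    {n n' : ℕ} (p g : Fin n → ℝ) (p' g' : Fin n' → ℝ)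
    (hp : ∀ i, 0 ≤ p i) (hps : ∑ i, p i = 1)
    (hp' : ∀ j, 0 ≤ p' j) (hps' : ∑ j, p' j = 1)
    (hg : ∀ i, 0 < g i) (hgs : ∑ i, g i = 1)
    (hg' : ∀ j, 0 < g' j) (hgs' : ∑ j, g' j = 1) :
    (∃ G : Matrix (Fin n') (Fin n) ℝ,
      (∀ j i, 0 ≤ G j i) ∧ (∀ i, ∑ j, G j i = 1) ∧
      G.mulVec p = p' ∧ G.mulVec g = g') ↔
    (∀ t ∈ Set.Icc (0:ℝ) 1, lorenz p' g' t ≤ lorenz p g t) := by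
  constructor
  · rintro ⟨G, hG, hGs, rfl, rfl⟩ t ht
    refine lorenz_le hgs' ht fun c hc hct => ?_
    have hswap : ∀ q : Fin n → ℝ,
        ∑ j, c j * G.mulVec q j = ∑ i, (∑ j, c j * G j i) * q i := fun q => by
      simp only [Matrix.mulVec, dotProduct, Finset.mul_sum, Finset.sum_mul, mul_assoc]
      exact Finset.sum_comm
    rw [hswap] at hct ⊢
    rw [← hct]
    refine le_lorenz hp fun i => ⟨Finset.sum_nonneg fun j _ => mul_nonneg (hc j).1 (hG j i), ?_⟩
    rw [← hGs i]
    exact Finset.sum_le_sum fun j _ => mul_le_of_le_one_left (hG j i) (hc j).2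
  · intro h
    obtain ⟨H, hH, hHp, hHg⟩ := exists_columns_of_forall_exists_le
      (exists_sum_le_of_lorenz_le hps hp' hps' hg hgs hg' hgs' h)
    refine ⟨fun j i => H i j, fun j i => (hH i).1 j, fun i => (hH i).2, ?_, ?_⟩
    · rw [← hHp]
      ext j
      simp [Matrix.mulVec, dotProduct, mul_comm]
    · rw [← hHg]
      ext j
      simp [Matrix.mulVec, dotProduct, mul_comm]
end

section
/- Let p ∈ ℝ^n be a probability vector, let g ∈ ℝ^n be a strictly positive probability vector, and let π be a permutation of {1,…,n} such that the sequence p_{π(1)}/g_{π(1)} ≥ p_{π(2)}/g_{π(2)} ≥ … ≥ p_{π(n)}/g_{π(n)} is non-increasing. Define L_{(p,g)}(t) = max { Σ_i c_i p_i : c ∈ ℝ^n, 0 ≤ c_i ≤ 1 for all i, Σ_i c_i g_i = t } for t ∈ [0,1]. Then (i) L_{(p,g)} is concave on [0,1], and (ii) for every k ∈ {0,1,…,n}, L_{(p,g)}(Σ_{i=1}^k g_{π(i)}) = Σ_{i=1}^k p_{π(i)}. -/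
/-- The values `Σ_i c_i p_i` whose supremum is the Lorenz curve at `t`. -/
def lorenzValues {n : ℕ} (p g : Fin n → ℝ) (t : ℝ) : Set ℝ :=
  {s : ℝ | ∃ c : Fin n → ℝ, (∀ i, 0 ≤ c i ∧ c i ≤ 1) ∧
    (∑ i, c i * g i = t) ∧ (∑ i, c i * p i = s)}

theorem lorenz_eq_sSup_lorenzValues {n : ℕ} (p g : Fin n → ℝ) (t : ℝ) :
    lorenz p g t = sSup (lorenzValues p g t) := rfl

theorem bddAbove_lorenzValues {n : ℕ} {p : Fin n → ℝ} (hp : ∀ i, 0 ≤ p i) (g : Fin n → ℝ)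
    (t : ℝ) : BddAbove (lorenzValues p g t) := by
  refine ⟨∑ i, p i, ?_⟩
  rintro s ⟨c, hc, -, rfl⟩
  exact Finset.sum_le_sum fun i _ => mul_le_of_le_one_left (hp i) (hc i).2

theorem lorenzValues_nonempty {n : ℕ} (p : Fin n → ℝ) {g : Fin n → ℝ} (hgs : ∑ i, g i = 1)
    {t : ℝ} (ht : t ∈ Set.Icc (0 : ℝ) 1) : (lorenzValues p g t).Nonempty :=
  ⟨_, fun _ => t, fun _ => ht, by rw [← Finset.mul_sum, hgs, mul_one], rfl⟩

open scoped Pointwise in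
theorem smul_lorenzValues_add_subset {n : ℕ} (p g : Fin n → ℝ) (x y : ℝ) {a b : ℝ}
    (ha : 0 ≤ a) (hb : 0 ≤ b) (hab : a + b = 1) :
    a • lorenzValues p g x + b • lorenzValues p g y ⊆ lorenzValues p g (a • x + b • y) := by
  rintro _ ⟨_, ⟨_, ⟨c, hc, rfl, rfl⟩, rfl⟩, _, ⟨_, ⟨d, hd, rfl, rfl⟩, rfl⟩, rfl⟩
  refine ⟨fun i => a * c i + b * d i, fun i => ⟨?_, ?_⟩, ?_, ?_⟩
  · exact add_nonneg (mul_nonneg ha (hc i).1) (mul_nonneg hb (hd i).1)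
  · nlinarith [mul_le_mul_of_nonneg_left (hc i).2 ha, mul_le_mul_of_nonneg_left (hd i).2 hb]
  all_goals simp only [smul_eq_mul, Finset.mul_sum, add_mul, Finset.sum_add_distrib, mul_assoc]

open scoped Pointwise in
theorem concaveOn_lorenz {n : ℕ} {p g : Fin n → ℝ} (hp : ∀ i, 0 ≤ p i) (hgs : ∑ i, g i = 1) :
    ConcaveOn ℝ (Set.Icc (0 : ℝ) 1) (lorenz p g) := by
  refine ⟨convex_Icc 0 1, fun x hx y hy a b ha hb hab => ?_⟩
  have hnx := (lorenzValues_nonempty p hgs hx).smul_set (a := a)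
  have hny := (lorenzValues_nonempty p hgs hy).smul_set (a := b)
  simp only [lorenz_eq_sSup_lorenzValues]
  rw [← Real.sSup_smul_of_nonneg ha, ← Real.sSup_smul_of_nonneg hb,
    ← csSup_add hnx ((bddAbove_lorenzValues hp g x).smul_of_nonneg ha) hny
      ((bddAbove_lorenzValues hp g y).smul_of_nonneg hb)]
  exact csSup_le_csSup (bddAbove_lorenzValues hp g _) (hnx.add hny)
    (smul_lorenzValues_add_subset p g x y ha hb hab)

/-- If a threshold `r` separates the ratios `p i / g i` over `S` from those outside `S`, then the
indicator of `S` is optimal. -/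
theorem lorenz_sum_eq_of_threshold {n : ℕ} (p g : Fin n → ℝ) (S : Finset (Fin n)) (r : ℝ)
    (hS : ∀ i ∈ S, r * g i ≤ p i) (hSc : ∀ i ∉ S, p i ≤ r * g i) :
    lorenz p g (∑ i ∈ S, g i) = ∑ i ∈ S, p i := by
  refine IsGreatest.csSup_eq ⟨⟨fun i => if i ∈ S then 1 else 0, fun i => ?_, ?_, ?_⟩, ?_⟩
  · dsimp only
    split_ifs <;> norm_num
  · simp
  · simp
  · rintro s ⟨c, hc, hcg, rfl⟩
    have key : ∑ i, c i * (p i - r * g i) ≤ ∑ i, if i ∈ S then p i - r * g i else 0 := by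
      refine Finset.sum_le_sum fun i _ => ?_
      split_ifs with hi
      · exact mul_le_of_le_one_left (sub_nonneg.2 (hS i hi)) (hc i).2
      · exact mul_nonpos_of_nonneg_of_nonpos (hc i).1 (sub_nonpos.2 (hSc i hi))
    simp only [Finset.sum_ite_mem, Finset.univ_inter, mul_sub, Finset.sum_sub_distrib,
      mul_left_comm _ r, ← Finset.mul_sum, hcg] at key
    linarith

/-- The Lorenz curve is concave on `[0,1]`, and it is the piecewise
linear curve through the points given by the partial sums of `p` and `g` sorted
by decreasing ratio `p_i/g_i`. -/
theorem lorenz_concave_and_interpolates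
    {n : ℕ} (p g : Fin n → ℝ)
    (hp : ∀ i, 0 ≤ p i) (hps : ∑ i, p i = 1)
    (hg : ∀ i, 0 < g i) (hgs : ∑ i, g i = 1)
    (π : Equiv.Perm (Fin n))
    (hsort : ∀ i j : Fin n, i ≤ j → p (π j) / g (π j) ≤ p (π i) / g (π i)) :
    ConcaveOn ℝ (Set.Icc (0:ℝ) 1) (lorenz p g) ∧
    ∀ k : ℕ, k ≤ n →
      lorenz p g (∑ i ∈ Finset.univ.filter (fun i : Fin n => (i : ℕ) < k), g (π i)) =
        ∑ i ∈ Finset.univ.filter (fun i : Fin n => (i : ℕ) < k), p (π i) := by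
  refine ⟨concaveOn_lorenz hp hgs, fun k hk => ?_⟩
  obtain ⟨r, hlt, hge⟩ : ∃ r : ℝ, (∀ i : Fin n, (i : ℕ) < k → r ≤ p (π i) / g (π i)) ∧
      ∀ i : Fin n, k ≤ (i : ℕ) → p (π i) / g (π i) ≤ r := by
    rcases hk.lt_or_eq with hkn | rfl
    · exact ⟨p (π ⟨k, hkn⟩) / g (π ⟨k, hkn⟩), fun i hi => hsort i ⟨k, hkn⟩ hi.le,
        fun i hi => hsort ⟨k, hkn⟩ i hi⟩
    · exact ⟨0, fun i _ => div_nonneg (hp _) (hg _).le, fun i hi => absurd i.2 hi.not_gt⟩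
  have h := lorenz_sum_eq_of_threshold p g
    ((Finset.univ.filter fun i : Fin n => (i : ℕ) < k).map π.toEmbedding) r ?_ ?_
  · simpa only [Finset.sum_map, Equiv.coe_toEmbedding] using h
  · intro i hi
    obtain ⟨j, hj, rfl⟩ := Finset.mem_map.1 hi
    exact (le_div_iff₀ (hg _)).1 (hlt j (Finset.mem_filter.1 hj).2)
  · intro i hi
    obtain ⟨j, rfl⟩ := π.surjective i
    refine (div_le_iff₀ (hg _)).1 (hge j (not_lt.1 fun hj => hi ?_))
    exact Finset.mem_map_of_mem π.toEmbedding (by simpa using hj)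
end

section
/- Let β > 0 and let 0 < E ≤ E'. For any energy gap a > 0, let g_a = (1/(1+e^{−βa}), e^{−βa}/(1+e^{−βa})) ∈ ℝ² be the two-level Gibbs probability vector. Then there exists a 2×2 matrix G with nonnegative entries whose columns each sum to 1 and which satisfies G·(0,1)ᵀ = (0,1)ᵀ and G·g_{E'} = g_E. (That is, the excited state of a two-level system with larger gap E' can be converted by a Gibbs-stochastic matrix to the excited state of a two-level system with smaller gap E.) -/
/-- The two-level Gibbs probability vector at inverse temperature `β` for
energy gap `a`: `(1/(1+e^{-βa}), e^{-βa}/(1+e^{-βa}))`. -/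
noncomputable def gibbs2 (β a : ℝ) : Fin 2 → ℝ :=
  ![1 / (1 + Real.exp (-β * a)), Real.exp (-β * a) / (1 + Real.exp (-β * a))]

/-- The excited state of a two-level system with larger gap `E'`
can be converted by a Gibbs-stochastic matrix to the excited state of a
two-level system with smaller gap `E`. -/
theorem excited_state_larger_gap_to_smaller_gap
    (β E E' : ℝ) (hβ : 0 < β) (hE : 0 < E) (hEE' : E ≤ E') :
    ∃ G : Matrix (Fin 2) (Fin 2) ℝ,
      (∀ i j, 0 ≤ G i j) ∧ (∀ j, ∑ i, G i j = 1) ∧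
      G.mulVec ![0, 1] = ![0, 1] ∧ G.mulVec (gibbs2 β E') = gibbs2 β E := by
  have hle : Real.exp (-β * E') ≤ Real.exp (-β * E) :=
    Real.exp_le_exp.mpr (by nlinarith)
  have hx := Real.exp_pos (-β * E)
  have hy := Real.exp_pos (-β * E')
  unfold gibbs2
  generalize Real.exp (-β * E) = x at *
  generalize Real.exp (-β * E') = y at *
  have hr : 0 ≤ (1 + y) / (1 + x) := by positivity
  have hr1 : (1 + y) / (1 + x) ≤ 1 := (div_le_one (by positivity)).mpr (by linarith)
  refine ⟨!![(1 + y) / (1 + x), 0; 1 - (1 + y) / (1 + x), 1], ?_, ?_, ?_, ?_⟩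
  · intro i j
    fin_cases i <;> fin_cases j <;> simp [hr, hr1]
  · intro j
    fin_cases j <;> simp [Fin.sum_univ_two]
  · ext i
    fin_cases i <;> simp [Matrix.mulVec, dotProduct, Fin.sum_univ_two]
  · ext i
    fin_cases i <;> simp [Matrix.mulVec, dotProduct, Fin.sum_univ_two] <;> field_simp <;> ring
end

section
/- Let β > 0, E > 0, W ∈ ℝ, and set y = e^{−βW}. Let p ∈ ℝ^n and p' ∈ ℝ^{n'} be probability vectors and g ∈ ℝ^n, g' ∈ ℝ^{n'} strictly positive probability vectors. Suppose G₁₁, G₁₂, G₂₁, G₂₂ ∈ ℝ^{n'×n} all have nonnegative entries and satisfy: G₂₁ p = 0; G₂₂ p = p'; G₁₁ g + e^{−βE} G₁₂ g = ((1+e^{−βE})/(1+e^{−β(E+W)})) g'; G₂₁ g + e^{−βE} G₂₂ g = y·((1+e^{−βE})/(1+e^{−β(E+W)}))·e^{−βE} g'; and for every column index i, the i-th column sums of G₁₁ and G₂₁ add to 1, and the i-th column sums of G₁₂ and G₂₂ add to 1. Then F := G₂₂ and x := y(1+e^{−βE})/(1+e^{−β(E+W)}) satisfy: F has nonnegative entries,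 x ≥ 0, F p = p', F g ≤ x g' entrywise, and every column sum of F is at most 1. -/
/-- A feasible block-form Gibbs-stochastic matrix for the
work-extraction program yields a feasible point `(x, F) = (y·Z_E/Z_{E+W}, G₂₂)`
of the linear program. -/
theorem block_feasible_to_linprog_feasible
    {n n' : ℕ} (β E W : ℝ) (hβ : 0 < β) (hE : 0 < E)
    (y : ℝ) (hy : y = Real.exp (-β * W))
    (p g : Fin n → ℝ) (p' g' : Fin n' → ℝ)
    (hp : ∀ i, 0 ≤ p i) (hps : ∑ i, p i = 1)
    (hp' : ∀ j, 0 ≤ p' j) (hps' : ∑ j, p' j = 1)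
    (hg : ∀ i, 0 < g i) (hgs : ∑ i, g i = 1)
    (hg' : ∀ j, 0 < g' j) (hgs' : ∑ j, g' j = 1)
    (G₁₁ G₁₂ G₂₁ G₂₂ : Matrix (Fin n') (Fin n) ℝ)
    (hG₁₁ : ∀ j i, 0 ≤ G₁₁ j i) (hG₁₂ : ∀ j i, 0 ≤ G₁₂ j i)
    (hG₂₁ : ∀ j i, 0 ≤ G₂₁ j i) (hG₂₂ : ∀ j i, 0 ≤ G₂₂ j i)
    (hp1 : G₂₁.mulVec p = 0)
    (hp2 : G₂₂.mulVec p = p')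
    (hg1 : ∀ j, G₁₁.mulVec g j + Real.exp (-β * E) * G₁₂.mulVec g j =
      ((1 + Real.exp (-β * E)) / (1 + Real.exp (-β * (E + W)))) * g' j)
    (hg2 : ∀ j, G₂₁.mulVec g j + Real.exp (-β * E) * G₂₂.mulVec g j =
      y * ((1 + Real.exp (-β * E)) / (1 + Real.exp (-β * (E + W)))) *
        Real.exp (-β * E) * g' j)
    (hn1 : ∀ i, (∑ j, G₁₁ j i) + (∑ j, G₂₁ j i) = 1)
    (hn2 : ∀ i, (∑ j, G₁₂ j i) + (∑ j, G₂₂ j i) = 1) :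
    (∀ j i, 0 ≤ G₂₂ j i) ∧
    0 ≤ y * (1 + Real.exp (-β * E)) / (1 + Real.exp (-β * (E + W))) ∧
    G₂₂.mulVec p = p' ∧
    (∀ j, G₂₂.mulVec g j ≤
      y * (1 + Real.exp (-β * E)) / (1 + Real.exp (-β * (E + W))) * g' j) ∧
    (∀ i, ∑ j, G₂₂ j i ≤ 1) := by
  refine ⟨hG₂₂, by rw [hy]; positivity, hp2, fun j => ?_, fun i => ?_⟩
  · have hnonneg : 0 ≤ G₂₁.mulVec g j :=
      dotProduct_nonneg_of_nonneg (fun i => hG₂₁ j i) fun i => (hg i).le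
    refine le_of_mul_le_mul_left ?_ (Real.exp_pos (-β * E))
    calc Real.exp (-β * E) * G₂₂.mulVec g j
        ≤ G₂₁.mulVec g j + Real.exp (-β * E) * G₂₂.mulVec g j :=
          le_add_of_nonneg_left hnonneg
      _ = Real.exp (-β * E) *
          (y * (1 + Real.exp (-β * E)) / (1 + Real.exp (-β * (E + W))) * g' j) := by
          rw [hg2 j]; ring
  · rw [← hn2 i]
    exact le_add_of_nonneg_left (Finset.sum_nonneg fun j _ => hG₁₂ j i)
end

section
/- Let p ∈ ℝ^n be a probability vector and g ∈ ℝ^n a strictly positive probability vector; take the output resource to be trivial, p' = g' = (1) ∈ ℝ¹. Consider all pairs (x, f) with x ∈ ℝ and f ∈ ℝ^{1×n} such that f has nonnegative entries, x ≥ 0, Σ_i f_i p_i = 1, Σ_i f_i g_i ≤ x, and f_i ≤ 1 for all i. Then the minimum of x over all such feasible pairs equals Σ_{i : p_i ≠ 0} g_i. (Consequently the extractable work from the resource (p,g) is W_gain = −(1/β) log Σ_{i : p_i ≠ 0} g_i.) -/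
/-- Work value of a resource. For the linear program converting
`(p,g)` to the trivial resource, the minimum of `x` over feasible pairs `(x,f)`
equals `Σ_{i : p_i ≠ 0} g_i`. -/
theorem work_value_linprog
    {n : ℕ} (p g : Fin n → ℝ)
    (hp : ∀ i, 0 ≤ p i) (hps : ∑ i, p i = 1)
    (hg : ∀ i, 0 < g i) (hgs : ∑ i, g i = 1) :
    IsLeast {x : ℝ | ∃ f : Fin n → ℝ,
        (∀ i, 0 ≤ f i) ∧ 0 ≤ x ∧ (∑ i, f i * p i = 1) ∧
        (∑ i, f i * g i ≤ x) ∧ (∀ i, f i ≤ 1)}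
      (∑ i ∈ Finset.univ.filter (fun i => p i ≠ 0), g i) := by
  refine ⟨⟨fun i => if p i ≠ 0 then 1 else 0, fun i => ?_,
    Finset.sum_nonneg fun i _ => (hg i).le, ?_, ?_, fun i => ?_⟩, ?_⟩
  · dsimp only
    split_ifs <;> norm_num
  · refine (Finset.sum_congr rfl fun i _ => ?_).trans hps
    by_cases h : p i = 0 <;> simp [h]
  · simp only [ite_mul, one_mul, zero_mul, ← Finset.sum_filter]
    exact le_rfl
  · dsimp only
    split_ifs <;> norm_num
  · rintro x ⟨f, hf, -, hfp, hfg, hf_le⟩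
    have hle : ∀ i ∈ Finset.univ, f i * p i ≤ p i := fun i _ =>
      mul_le_of_le_one_left (hp i) (hf_le i)
    have heq := (Finset.sum_eq_sum_iff_of_le hle).1 (hfp.trans hps.symm)
    refine le_trans ?_ hfg
    rw [Finset.sum_filter]
    refine Finset.sum_le_sum fun i hi => ?_
    split_ifs with h
    · rw [(mul_eq_right₀ h).1 (heq i hi), one_mul]
    · exact mul_nonneg (hf i) (hg i).le
end

section
/- Let p' ∈ ℝ^{n'} be a probability vector and g' ∈ ℝ^{n'} a strictly positive probability vector; take the input resource to be trivial, p = g = (1) ∈ ℝ¹. Consider all pairs (x, F) with x ∈ ℝ and F ∈ ℝ^{n'×1} such that F has nonnegative entries, x ≥ 0, F·(1) = p', F·(1) ≤ x g' entrywise, and the column sum of F is at most 1. Then the minimum of x over all such feasible pairs equals max_i p'_i / g'_i. (Consequently the work cost of creating the resource (p',g') is W_cost = (1/β) log max_i p'_i/g'_i.) -/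
/-- Work cost of creating a resource. For the linear program
converting the trivial resource to `(p',g')`, the minimum of `x` over feasible
pairs `(x,F)` equals `max_i p'_i / g'_i`. -/
theorem work_cost_linprog
    {n' : ℕ} (p' g' : Fin n' → ℝ)
    (hp' : ∀ j, 0 ≤ p' j) (hps' : ∑ j, p' j = 1)
    (hg' : ∀ j, 0 < g' j) (hgs' : ∑ j, g' j = 1) :
    IsLeast {x : ℝ | ∃ F : Matrix (Fin n') (Fin 1) ℝ,
        (∀ j i, 0 ≤ F j i) ∧ 0 ≤ x ∧
        (F.mulVec (fun _ => 1) = p') ∧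
        (∀ j, F.mulVec (fun _ => 1) j ≤ x * g' j) ∧
        (∑ j, F j 0 ≤ 1)}
      (⨆ j, p' j / g' j) := by
  constructor
  · have hF : (Matrix.of fun j (_ : Fin 1) => p' j).mulVec (fun _ => 1) = p' := by
      ext j
      simp [Matrix.mulVec, dotProduct]
    refine ⟨Matrix.of fun j _ => p' j, fun j _ => hp' j,
      Real.iSup_nonneg fun j => div_nonneg (hp' j) (hg' j).le, hF, fun j => ?_, hps'.le⟩
    rw [hF, ← div_le_iff₀ (hg' j)]
    exact le_ciSup (f := fun j => p' j / g' j) (Set.finite_range _).bddAbove j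
  · rintro x ⟨F, -, hx, hF, hFx, -⟩
    refine Real.iSup_le (fun j => ?_) hx
    rw [div_le_iff₀ (hg' j), ← hF]
    exact hFx j
end

section
/- Let p ∈ ℝ² be a probability vector with p₁ > 0 and p₂ > 0, let g = g' = (1/2, 1/2) (the Gibbs state of a trivial two-level Hamiltonian), and let p' = (1, 0) (the erased state). Consider all pairs (x, F) with x ∈ ℝ and F ∈ ℝ^{2×2} such that F has nonnegative entries, x ≥ 0, F p = p', F g ≤ x g' entrywise, and every column sum of F is at most 1. Then the minimum of x over all such feasible pairs equals 2, and the unique feasible F is F = [[1,1],[0,0]]. (Consequently the work cost of erasing the bit is (1/β) log 2, which is Landauer's principle.) -/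
/-- A nonnegative, column-substochastic `2 × 2` matrix that maps a fully supported probability
vector to the erased state `(1, 0)` is `[[1,1],[0,0]]`. -/
lemma eq_erasure_of_mulVec_eq {p : Fin 2 → ℝ} (hp0 : 0 < p 0) (hp1 : 0 < p 1)
    (hps : ∑ i, p i = 1) {F : Matrix (Fin 2) (Fin 2) ℝ} (hF : ∀ j i, 0 ≤ F j i)
    (hFp : F.mulVec p = ![1, 0]) (hcol : ∀ i, ∑ j, F j i ≤ 1) :
    F = !![1, 1; 0, 0] := by
  have h0 : F 0 0 * p 0 + F 0 1 * p 1 = 1 := by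
    simpa [Matrix.mulVec, dotProduct, Fin.sum_univ_two] using congrFun hFp 0
  have h1 : F 1 0 * p 0 + F 1 1 * p 1 = 0 := by
    simpa [Matrix.mulVec, dotProduct, Fin.sum_univ_two] using congrFun hFp 1
  simp only [Fin.sum_univ_two] at hps hcol
  have h10 : F 1 0 = 0 := by nlinarith [hF 1 0, mul_nonneg (hF 1 1) hp1.le]
  have h11 : F 1 1 = 0 := by nlinarith [hF 1 1, mul_nonneg (hF 1 0) hp0.le]
  have c0 : F 0 0 ≤ 1 := by linarith [hcol 0]
  have c1 : F 0 1 ≤ 1 := by linarith [hcol 1]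
  have h00 : F 0 0 = 1 := by nlinarith [mul_nonneg (sub_nonneg.2 c1) hp1.le]
  have h01 : F 0 1 = 1 := by nlinarith [mul_nonneg (sub_nonneg.2 c0) hp0.le]
  ext i j
  fin_cases i <;> fin_cases j <;> simp [h00, h01, h10, h11]

/-- Landauer's principle via the linear program. Erasing a bit
(with trivial Hamiltonian, Gibbs state `(1/2,1/2)`) has optimal value `x = 2`,
and the unique feasible matrix is `F = [[1,1],[0,0]]`, so the work cost is
`(1/β) log 2`. -/
theorem landauer_linprog
    (p : Fin 2 → ℝ) (hp0 : 0 < p 0) (hp1 : 0 < p 1) (hps : ∑ i, p i = 1) :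
    IsLeast {x : ℝ | ∃ F : Matrix (Fin 2) (Fin 2) ℝ,
        (∀ j i, 0 ≤ F j i) ∧ 0 ≤ x ∧
        F.mulVec p = ![1, 0] ∧
        (∀ j, F.mulVec ![(1:ℝ)/2, 1/2] j ≤ x * (![(1:ℝ)/2, 1/2] j)) ∧
        (∀ i, ∑ j, F j i ≤ 1)} 2 ∧
    (∀ x : ℝ, ∀ F : Matrix (Fin 2) (Fin 2) ℝ,
      (∀ j i, 0 ≤ F j i) → 0 ≤ x →
      F.mulVec p = ![1, 0] →
      (∀ j, F.mulVec ![(1:ℝ)/2, 1/2] j ≤ x * (![(1:ℝ)/2, 1/2] j)) →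
      (∀ i, ∑ j, F j i ≤ 1) →
      F = !![1, 1; 0, 0]) := by
  refine ⟨⟨⟨!![1, 1; 0, 0], ?_, by norm_num, ?_, ?_, ?_⟩, ?_⟩, ?_⟩
  · intro j i
    fin_cases j <;> fin_cases i <;> simp
  · rw [Fin.sum_univ_two] at hps
    ext j
    fin_cases j <;> simp [Matrix.mulVec, dotProduct, Fin.sum_univ_two, hps]
  · intro j
    fin_cases j <;> norm_num [Matrix.mulVec, dotProduct, Fin.sum_univ_two]
  · intro i
    fin_cases i <;> simp [Fin.sum_univ_two]
  · rintro x ⟨F, hF, -, hFp, hFg, hcol⟩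
    have h := hFg 0
    rw [eq_erasure_of_mulVec_eq hp0 hp1 hps hF hFp hcol] at h
    norm_num [Matrix.mulVec, dotProduct, Fin.sum_univ_two] at h
    linarith
  · intro x F hF _ hFp _ hcol
    exact eq_erasure_of_mulVec_eq hp0 hp1 hps hF hFp hcol
end
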